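/- arXiv:1402.6301 — 4 statements merged into one kernel-verified Lean document; each statement's English description precedes it below -/
import Mathlib

section
/- Let q be a prime power and let f(T) = T² + bT + c ∈ 𝔽_q[T] be a monic quadratic polynomial such that T = 0 is not a double root of T·f(T) (i.e., (b,c) ≠ (0,0)). Then the polynomial Y³ − x·f(x) is irreducible in 𝔽_q(x)[Y]; in particular, F = 𝔽_q(x)[Y]/(Y³ − x·f(x)) is a field and [F : 𝔽_q(x)] = 3. -/
open Polynomial

/-- The rational function `x·f(x) = x(x² + bx + c)` in `𝔽_q(x)`. -/
noncomputable def xfx (Fq : Type*) [Field Fq] (b c : Fq) : RatFunc Fq :=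
  RatFunc.X * (RatFunc.X ^ 2 + RatFunc.C b * RatFunc.X + RatFunc.C c)

/-- The Kummer polynomial `Y³ − x·f(x)` over the rational function field `𝔽_q(x)`. -/
noncomputable def kummerPoly (Fq : Type*) [Field Fq] (b c : Fq) : Polynomial (RatFunc Fq) :=
  X ^ 3 - C (xfx Fq b c)

/-- For a finite field `𝔽_q` and a monic quadratic `f(T) = T² + bT + c`
such that `T = 0` is not a double root of `T·f(T)` (i.e. `(b,c) ≠ (0,0)`), the polynomial
`Y³ − x·f(x)` is irreducible over `𝔽_q(x)`; in particular
`F = 𝔽_q(x)[Y]/(Y³ − x·f(x))` is a field and `[F : 𝔽_q(x)] = 3`. -/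
theorem stmt_0 (Fq : Type*) [Field Fq] [Fintype Fq] (b c : Fq)
    (hbc : ¬(b = 0 ∧ c = 0)) :
    Irreducible (kummerPoly Fq b c) ∧
      IsField (AdjoinRoot (kummerPoly Fq b c)) ∧
      Module.finrank (RatFunc Fq) (AdjoinRoot (kummerPoly Fq b c)) = 3 := by
  have hirr : Irreducible (kummerPoly Fq b c) := by
    unfold kummerPoly
    refine X_pow_sub_C_irreducible_of_prime Nat.prime_three ?_
    intro y hy
    have hx : xfx Fq b c =
        algebraMap Fq[X] (RatFunc Fq) (X * (X ^ 2 + C b * X + C c)) := by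
      simp [xfx, RatFunc.algebraMap_X, RatFunc.algebraMap_C]
    rw [hx] at hy
    have hint : IsIntegral Fq[X] y := by
      refine IsIntegral.of_pow (n := 3) (by norm_num) ?_
      rw [hy]
      exact isIntegral_algebraMap
    obtain ⟨p, rfl⟩ := IsIntegrallyClosed.isIntegral_iff.mp hint
    rw [← map_pow] at hy
    have hp : p ^ 3 = X * (X ^ 2 + C b * X + C c) :=
      IsFractionRing.injective Fq[X] (RatFunc Fq) hy
    have hd : (X : Fq[X]) ∣ p := prime_X.dvd_of_dvd_pow (hp ▸ dvd_mul_right _ _)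
    obtain ⟨r, rfl⟩ := hd
    have h2 : (X : Fq[X]) ^ 2 * r ^ 3 = X ^ 2 + C b * X + C c := by
      apply mul_left_cancel₀ (X_ne_zero (R := Fq))
      rw [← hp]; ring
    have hdvd : (X : Fq[X]) ^ 2 ∣ X ^ 2 + C b * X + C c := ⟨_, h2.symm⟩
    rw [X_pow_dvd_iff] at hdvd
    have h0 := hdvd 0 (by norm_num)
    have h1 := hdvd 1 (by norm_num)
    apply hbc
    constructor
    · simpa [coeff_X_pow, coeff_C] using h1
    · simpa [coeff_X_pow, coeff_C] using h0
  refine ⟨hirr, ?_, ?_⟩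
  · haveI := Fact.mk hirr
    exact Field.toIsField _
  · rw [(AdjoinRoot.powerBasis hirr.ne_zero).finrank, AdjoinRoot.powerBasis_dim]
    unfold kummerPoly
    exact natDegree_X_pow_sub_C
end

section
/- Let q = p^r be a prime power with q ≡ 1 (mod 3), f(T) = T² + bT + c ∈ 𝔽_q[T] a monic quadratic polynomial irreducible over 𝔽_q, and F = 𝔽_q(x)[Y]/(Y³ − x·f(x)). Let A be the integral closure of the polynomial ring 𝔽_q[x] in F, let Q₁ be the unique maximal ideal of A lying over (x) and Q₂ the unique maximal ideal of A lying over (f(x)). Then the different ideal of A over 𝔽_q[x] equals Q₁²·Q₂²; that is, the (finite part of the) different divisor of F/𝔽_q(x) is 2Q₁ + 2Q₂. -/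
set_option synthInstance.maxHeartbeats 400000

open Polynomial

theorem eis_aux {R : Type*} [CommRing R] [IsDomain R] {p u : R} (hp : Prime p) (hu : ¬ p ∣ u) :
    (X ^ 3 - C (p * u) : R[X]).IsEisensteinAt (Ideal.span {p}) := by
  have hdeg : (X ^ 3 - C (p * u) : R[X]).natDegree = 3 := natDegree_X_pow_sub_C
  have hmon : (X ^ 3 - C (p * u) : R[X]).Monic := monic_X_pow_sub_C _ (by norm_num)
  refine ⟨?_, ?_, ?_⟩
  · rw [hmon.leadingCoeff, Ideal.mem_span_singleton]
    exact fun h => hp.not_isUnit (isUnit_of_dvd_one h)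
  · intro n hn
    rw [hdeg] at hn
    rw [Ideal.mem_span_singleton, coeff_sub, coeff_X_pow, if_neg (by omega), zero_sub, coeff_C]
    split_ifs
    · exact (Dvd.intro _ rfl).neg_right
    · simp
  · rw [Ideal.span_singleton_pow, Ideal.mem_span_singleton]
    simp only [coeff_sub, coeff_X_pow, coeff_C]
    norm_num
    rw [pow_two]
    intro h
    exact hu ((mul_dvd_mul_iff_left hp.ne_zero).1 h)

theorem main_aux {R K L : Type*} [CommRing R] [IsDomain R] [IsIntegrallyClosed R] [Field K] [Field L]
    [Algebra R K] [IsFractionRing R K] [Algebra K L] [Algebra R L] [IsScalarTower R K L]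
    [IsDedekindDomain (integralClosure R L)] [Module.IsTorsionFree R (integralClosure R L)]
    (pb : PowerBasis K L) {p u : R} (hp : Prime p) (hu : Prime u) (hpu : ¬ p ∣ u) (hup : ¬ u ∣ p)
    (h3 : IsUnit (3 : R))
    (hmin : minpoly K pb.gen = X ^ 3 - C (algebraMap R K (p * u)))
    (Q₁ Q₂ : Ideal (integralClosure R L)) (hQ₁max : Q₁.IsMaximal)
    (hQ₁ : Q₁.comap (algebraMap R (integralClosure R L)) = Ideal.span {p})
    (hQ₂max : Q₂.IsMaximal)
    (hQ₂ : Q₂.comap (algebraMap R (integralClosure R L)) = Ideal.span {u}) :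
    differentIdeal R (integralClosure R L) = Q₁ ^ 2 * Q₂ ^ 2 := by
  have hy3 : pb.gen ^ 3 = algebraMap R L (p * u) := by
    have := minpoly.aeval K pb.gen
    rw [hmin] at this
    simp only [map_sub, map_pow, aeval_X, aeval_C, ← IsScalarTower.algebraMap_apply] at this
    exact sub_eq_zero.1 this
  have hint : IsIntegral R pb.gen := by
    refine ⟨X ^ 3 - C (p * u), monic_X_pow_sub_C _ (by norm_num), ?_⟩
    simp [hy3]
  have hfd : FiniteDimensional K L := pb.finite
  have h3K : (3 : K) ≠ 0 := by
    have := (h3.map (algebraMap R K)).ne_zero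
    rwa [map_ofNat] at this
  have hpu0 : p * u ≠ 0 := mul_ne_zero hp.ne_zero hu.ne_zero
  have hpuK : algebraMap R K (p * u) ≠ 0 := by
    simpa using hpu0
  have hsep1 : IsSeparable K pb.gen := by
    rw [IsSeparable, hmin]
    exact separable_X_pow_sub_C _ (by exact_mod_cast h3K) hpuK
  have htop : Algebra.adjoin K {pb.gen} = ⊤ := pb.adjoin_gen_eq_top
  have hsep : Algebra.IsSeparable K L := by
    have h1 : IntermediateField.adjoin K {pb.gen} = ⊤ := by
      apply IntermediateField.toSubalgebra_injective
      rw [IntermediateField.adjoin_simple_toSubalgebra_of_isAlgebraic hsep1.isIntegral.isAlgebraic, htop]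
      rfl
    have h2 : Algebra.IsSeparable K (IntermediateField.adjoin K {pb.gen}) :=
      (IntermediateField.isSeparable_adjoin_simple_iff_isSeparable K L).2 hsep1
    rw [h1] at h2
    exact Algebra.IsSeparable.of_algHom K (⊤ : IntermediateField K L)
      (IntermediateField.topEquiv (F := K) (E := L)).symm.toAlgHom
  have hminR : minpoly R pb.gen = X ^ 3 - C (p * u) := by
    apply map_injective (algebraMap R K) (IsFractionRing.injective R K)
    rw [← minpoly.isIntegrallyClosed_eq_field_fractions' K hint, hmin]
    simp
  have hdim : pb.dim = 3 := by
    rw [← pb.natDegree_minpoly, hmin]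
    exact natDegree_X_pow_sub_C
  -- integral elements are in adjoin
  have hadj : ∀ z : L, IsIntegral R z → z ∈ Algebra.adjoin R {pb.gen} := by
    intro z hz
    have hd := Algebra.discr_mul_isIntegral_mem_adjoin K hint hz
    have hnorm : Algebra.norm K pb.gen = algebraMap R K (p * u) := by
      rw [Algebra.PowerBasis.norm_gen_eq_coeff_zero_minpoly, hdim, hmin]
      simp
      ring
    have hdisc : Algebra.discr K pb.basis = algebraMap R K (-27 * (p * u) ^ 2) := by
      rw [Algebra.discr_powerBasis_eq_norm, hmin, Module.finrank_eq_card_basis pb.basis,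
        Fintype.card_fin, hdim]
      have : aeval pb.gen (derivative (X ^ 3 - C (algebraMap R K (p * u)))) =
          algebraMap K L 3 * pb.gen ^ 2 := by
        rw [derivative_sub, derivative_C, sub_zero, derivative_X_pow, map_mul, aeval_C, map_pow,
          aeval_X]
        norm_num
      rw [this, map_mul, map_pow, hnorm, Algebra.norm_algebraMap,
        Module.finrank_eq_card_basis pb.basis, Fintype.card_fin, hdim]
      rw [map_mul _ (-27), map_neg, map_ofNat, map_pow]
      norm_num
    rw [hdisc, algebraMap_smul] at hd
    obtain ⟨v, hv⟩ := h3.exists_left_inv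
    have hd2 : (p * u) ^ 2 • z ∈ Algebra.adjoin R {pb.gen} := by
      have := (Algebra.adjoin R {pb.gen}).smul_mem hd (-v ^ 3)
      rw [smul_smul] at this
      convert this using 2
      linear_combination (-(p * u) ^ 2 * ((v * 3) ^ 2 + v * 3 + 1)) * hv
    rw [mul_pow, mul_smul] at hd2
    have hd3 := mem_adjoin_of_smul_prime_pow_smul_of_minpoly_isEisensteinAt hp hint
      (hz.smul (u ^ 2)) hd2 (by rw [hminR]; exact eis_aux hp hpu)
    exact mem_adjoin_of_smul_prime_pow_smul_of_minpoly_isEisensteinAt hu hint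
      hz hd3 (by rw [hminR, mul_comm]; exact eis_aux hu hup)
  -- the generator
  let y : integralClosure R L := ⟨pb.gen, hint⟩
  have hyy : algebraMap (integralClosure R L) L y = pb.gen := rfl
  have hyint : IsIntegral R y := IsIntegralClosure.isIntegral R L y
  have hinj : Function.Injective (algebraMap (integralClosure R L) L) :=
    Subtype.val_injective
  have hyc : y ^ 3 = algebraMap R (integralClosure R L) (p * u) := by
    apply hinj
    rw [map_pow, hyy, hy3]
    rfl
  have hadjA : Algebra.adjoin R {y} = ⊤ := by
    rw [eq_top_iff]
    rintro z -
    have hz := hadj z.1 z.2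
    have : ({pb.gen} : Set L) = (integralClosure R L).val '' {y} := by simp [y]
    rw [this, ← AlgHom.map_adjoin] at hz
    obtain ⟨w, hw, hwz⟩ := hz
    have : w = z := Subtype.ext hwz
    exact this ▸ hw
  have hminA : minpoly R y = X ^ 3 - C (p * u) := by
    rw [← hminR, ← hyy, minpoly.algebraMap_eq hinj]
  have hdiff : differentIdeal R (integralClosure R L) = Ideal.span {y} ^ 2 := by
    have h := conductor_mul_differentIdeal R K L y (by rw [hyy]; exact htop)
    rw [conductor_eq_top_of_adjoin_eq_top hadjA, ← Ideal.one_eq_top, one_mul, hminA] at h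
    rw [h, Ideal.span_singleton_pow]
    have h3A : IsUnit (3 : integralClosure R L) := by
      have := h3.map (algebraMap R (integralClosure R L))
      rwa [map_ofNat] at this
    have : aeval y (derivative (X ^ 3 - C (p * u))) = 3 * y ^ 2 := by
      rw [derivative_sub, derivative_C, sub_zero, derivative_X_pow, map_mul, aeval_C, map_pow,
        aeval_X, map_natCast]
      norm_num
    rw [this, Ideal.span_singleton_mul_left_unit h3A]
  have memQ : ∀ (Q : Ideal (integralClosure R L)) (r : R), Q.IsMaximal →
      Q.comap (algebraMap R (integralClosure R L)) = Ideal.span {r} → r ∣ p * u → y ∈ Q := by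
    intro Q r hQ hc hr
    apply hQ.isPrime.mem_of_pow_mem 3
    rw [hyc, ← Ideal.mem_comap, hc, Ideal.mem_span_singleton]
    exact hr
  have hy1 := memQ Q₁ p hQ₁max hQ₁ (Dvd.intro _ rfl)
  have hy2 := memQ Q₂ u hQ₂max hQ₂ (Dvd.intro_left _ rfl)
  have hne : Q₁ ≠ Q₂ := by
    rintro rfl
    rw [hQ₁, Ideal.span_singleton_eq_span_singleton] at hQ₂
    exact hpu hQ₂.dvd
  have hcop : Q₁ * Q₂ = Q₁ ⊓ Q₂ :=
    Ideal.mul_eq_inf_of_coprime (hQ₁max.coprime_of_ne hQ₂max hne)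
  have hdecomp : ∀ z : integralClosure R L, ∃ (r : R) (w : integralClosure R L),
      z = algebraMap R _ r + y * w := by
    intro z
    have hz : z ∈ Algebra.adjoin R {y} := hadjA ▸ Algebra.mem_top
    rw [Algebra.adjoin_singleton_eq_range_aeval] at hz
    obtain ⟨g, rfl⟩ := hz
    refine ⟨g.coeff 0, aeval y g.divX, ?_⟩
    have h := congrArg (aeval y) (X_mul_divX_add g)
    rw [map_add, map_mul, aeval_X, aeval_C, add_comm] at h
    exact h.symm
  have hspan : Ideal.span {y} = Q₁ * Q₂ := by
    rw [hcop]
    apply le_antisymm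
    · rw [Ideal.span_singleton_le_iff_mem]
      exact ⟨hy1, hy2⟩
    · rintro z ⟨hz1, hz2⟩
      obtain ⟨r, w, rfl⟩ := hdecomp z
      have hr : ∀ Q : Ideal (integralClosure R L), y ∈ Q →
          algebraMap R _ r + y * w ∈ Q → algebraMap R _ r ∈ Q := fun Q h1 h2 =>
        (Q.add_mem_iff_left (Q.mul_mem_right _ h1)).1 h2
      have hr1 := hr _ hy1 hz1
      have hr2 := hr _ hy2 hz2
      rw [← Ideal.mem_comap, hQ₁, Ideal.mem_span_singleton] at hr1
      rw [← Ideal.mem_comap, hQ₂, Ideal.mem_span_singleton] at hr2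
      obtain ⟨s, rfl⟩ := hr1
      obtain ⟨t, rfl⟩ := (hu.dvd_or_dvd hr2).resolve_left hup
      rw [Ideal.mem_span_singleton]
      refine dvd_add ?_ (Dvd.intro _ rfl)
      rw [← mul_assoc, map_mul, ← hyc]
      exact (dvd_pow_self y (by norm_num)).mul_right _
  rw [hdiff, hspan, mul_pow]

/-- Let `𝔽_q` be a finite field with `q ≡ 1 (mod 3)`,
`f(T) = T² + bT + c` monic quadratic irreducible over `𝔽_q`, and
`F = 𝔽_q(x)[Y]/(Y³ − x·f(x))`.  Let `A` be the integral closure of `𝔽_q[x]` in `F`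
(a Dedekind domain), `Q₁` the unique maximal ideal of `A` over `(x)` and `Q₂` the unique
maximal ideal of `A` over `(f(x))`.  Then the different ideal of `A/𝔽_q[x]` equals
`Q₁²·Q₂²`; i.e. the different divisor of `F/𝔽_q(x)` is `2Q₁ + 2Q₂`. -/
theorem stmt_6 (Fq : Type*) [Field Fq] [Fintype Fq] (hq : Fintype.card Fq % 3 = 1)
    (b c : Fq) (hf : Irreducible (X ^ 2 + C b * X + C c : Polynomial Fq))
    [IsDedekindDomain (integralClosure (Polynomial Fq) (AdjoinRoot (kummerPoly Fq b c)))]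
    [NoZeroSMulDivisors (Polynomial Fq)
      (integralClosure (Polynomial Fq) (AdjoinRoot (kummerPoly Fq b c)))]
    (Q₁ Q₂ : Ideal (integralClosure (Polynomial Fq) (AdjoinRoot (kummerPoly Fq b c))))
    (hQ₁max : Q₁.IsMaximal)
    (hQ₁ : Q₁.comap (algebraMap (Polynomial Fq)
        (integralClosure (Polynomial Fq) (AdjoinRoot (kummerPoly Fq b c)))) =
      Ideal.span {(X : Polynomial Fq)})
    (hQ₂max : Q₂.IsMaximal)
    (hQ₂ : Q₂.comap (algebraMap (Polynomial Fq)
        (integralClosure (Polynomial Fq) (AdjoinRoot (kummerPoly Fq b c)))) =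
      Ideal.span {(X ^ 2 + C b * X + C c : Polynomial Fq)}) :
    differentIdeal (Polynomial Fq)
        (integralClosure (Polynomial Fq) (AdjoinRoot (kummerPoly Fq b c))) =
      Q₁ ^ 2 * Q₂ ^ 2 := by
  have h3 : (3 : Fq) ≠ 0 := by
    intro h
    have hc : ringChar Fq ∣ 3 := (ringChar.spec Fq 3).1 (by exact_mod_cast h)
    have hpr : (ringChar Fq).Prime := CharP.char_is_prime Fq _
    have h33 : ringChar Fq = 3 := (Nat.prime_dvd_prime_iff_eq hpr Nat.prime_three).1 hc
    obtain ⟨n, -, hn⟩ := FiniteField.card Fq (ringChar Fq)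
    rw [hn, h33] at hq
    have : 3 ∣ 3 ^ (n : ℕ) := dvd_pow_self 3 n.ne_zero
    omega
  have hdegf : (X ^ 2 + C b * X + C c : Fq[X]).natDegree = 2 := by compute_degree!
  have hX : Prime (X : Fq[X]) := prime_X
  have hnd : ¬ Associated (X : Fq[X]) (X ^ 2 + C b * X + C c) := by
    intro h
    have := natDegree_eq_of_degree_eq (degree_eq_degree_of_associated h)
    rw [hdegf, natDegree_X] at this
    omega
  have hpu : ¬ (X : Fq[X]) ∣ (X ^ 2 + C b * X + C c) := fun h =>
    hnd (hX.associated_of_dvd hf.prime h)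
  have hup : ¬ (X ^ 2 + C b * X + C c : Fq[X]) ∣ X := fun h =>
    hnd (hf.prime.associated_of_dvd hX h).symm
  have hkp : kummerPoly Fq b c = X ^ 3 - C (algebraMap Fq[X] (RatFunc Fq)
      (X * (X ^ 2 + C b * X + C c))) := by
    simp [kummerPoly, xfx]
  have hmon : (kummerPoly Fq b c).Monic := monic_X_pow_sub_C _ (by norm_num)
  have hirr : Irreducible (kummerPoly Fq b c) := by
    have hm : (X ^ 3 - C (X * (X ^ 2 + C b * X + C c)) : Fq[X][X]).Monic :=
      monic_X_pow_sub_C _ (by norm_num)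
    have h := (eis_aux hX hpu).irreducible ((Ideal.span_singleton_prime hX.ne_zero).2 hX)
      hm.isPrimitive (by rw [natDegree_X_pow_sub_C]; norm_num)
    have h2 := (hm.irreducible_iff_irreducible_map_fraction_map (K := RatFunc Fq)).1 h
    rw [hkp]
    simpa using h2
  have : Fact (Irreducible (kummerPoly Fq b c)) := ⟨hirr⟩
  have h3u : IsUnit (3 : Fq[X]) := by
    have := (IsUnit.mk0 (3 : Fq) h3).map (C : Fq →+* Fq[X])
    rwa [map_ofNat] at this
  have : Module.IsTorsionFree Fq[X] (integralClosure Fq[X] (AdjoinRoot (kummerPoly Fq b c))) :=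
    inferInstance
  exact main_aux (K := RatFunc Fq) (L := AdjoinRoot (kummerPoly Fq b c))
    (AdjoinRoot.powerBasis hirr.ne_zero) hX hf.prime hpu hup h3u
    (by rw [AdjoinRoot.minpoly_powerBasis_gen_of_monic hmon, hkp]) Q₁ Q₂ hQ₁max hQ₁ hQ₂max hQ₂
end

section
/- Let K be a field, let b, c ∈ K with c ≠ 0, let L be a field extension of K, and let x, y ∈ L be nonzero elements with y³ = x³ + bx² + cx. Let v be a valuation on L with values in a linearly ordered commutative group with zero, such that v(a) = 1 for every a ∈ Kˣ. If v(x) < 1 (i.e., x has a zero at the place determined by v), then v(y)³ = v(x); in particular, v(y) < 1 and the multiplicity of x at such a place is three times that of y. -/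
/-- Let `K` be a field, `b c ∈ K` with `c ≠ 0`, `L/K` a field extension,
and let `x, y ∈ L` be nonzero with `y³ = x³ + bx² + cx`.  Let `v` be a valuation on `L`,
with values in a linearly ordered commutative group with zero, trivial on `Kˣ`.
If `v(x) < 1` (i.e. `x` has a zero at the place determined by `v`), then `v(y)³ = v(x)`;
in particular `v(y) < 1` and the multiplicity of `x` at such a place is three times
that of `y`. -/
theorem stmt_9 (K : Type*) [Field K] (b c : K) (hc : c ≠ 0) (L : Type*) [Field L]
    [Algebra K L] (x y : L) (hx : x ≠ 0) (hy : y ≠ 0)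
    (hxy : y ^ 3 = x ^ 3 + algebraMap K L b * x ^ 2 + algebraMap K L c * x)
    (Γ₀ : Type*) [LinearOrderedCommGroupWithZero Γ₀] (v : Valuation L Γ₀)
    (hv : ∀ a : K, a ≠ 0 → v (algebraMap K L a) = 1)
    (hvx : v x < 1) :
    v y ^ 3 = v x ∧ v y < 1 := by
  have hb : v (algebraMap K L b) ≤ 1 := by
    by_cases h : b = 0
    · simp [h]
    · exact (hv b h).le
  have hxb : v (x + algebraMap K L b) ≤ 1 :=
    (v.map_add _ _).trans (max_le hvx.le hb)
  have h1 : v (x * (x + algebraMap K L b)) < v (algebraMap K L c) := by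
    rw [hv c hc, map_mul]
    exact (mul_le_of_le_one_right' hxb).trans_lt hvx
  have h2 : v (x * (x + algebraMap K L b) + algebraMap K L c) = 1 := by
    rw [v.map_add_eq_of_lt_right h1, hv c hc]
  have h3 : v y ^ 3 = v x := by
    have : y ^ 3 = x * (x * (x + algebraMap K L b) + algebraMap K L c) := by
      rw [hxy]; ring
    rw [← map_pow, this, map_mul, h2, mul_one]
  refine ⟨h3, ?_⟩
  by_contra! h
  exact absurd hvx (not_lt.mpr (h3 ▸ one_le_pow₀ h))
end

section
/- Let q = p^r be a prime power with q ≡ 1 (mod 3), f(T) = T² + bT + c ∈ 𝔽_q[T] a monic quadratic polynomial irreducible over 𝔽_q, and F = 𝔽_q(x)[Y]/(Y³ − x·f(x)). Then 𝔽_q is the full field of constants of F: every element of F that is algebraic over 𝔽_q lies in (the canonical image of) 𝔽_q; equivalently, the integral closure of 𝔽_q in F equals 𝔽_q. -/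
set_option synthInstance.maxHeartbeats 400000

open Polynomial

theorem no_cube (K : Type*) [Field K] (g : RatFunc K) (u : K[X]) (k : K)
    (hu : u.rootMultiplicity 0 % 3 ≠ 0)
    (h : g ^ 3 * algebraMap K[X] (RatFunc K) u = RatFunc.C k) : g = 0 := by
  by_contra hg
  have hu0 : u ≠ 0 := by rintro rfl; simp at hu
  have hinj : Function.Injective (algebraMap K[X] (RatFunc K)) :=
    IsFractionRing.injective K[X] (RatFunc K)
  have hd : g.denom ≠ 0 := g.denom_ne_zero
  have hn : g.num ≠ 0 := RatFunc.num_ne_zero hg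
  have hd' : algebraMap K[X] (RatFunc K) g.denom ≠ 0 := by
    simpa using hd
  have e : g.num ^ 3 * u = C k * g.denom ^ 3 := by
    apply hinj
    have h2 := h
    rw [← RatFunc.num_div_denom g] at h2
    simp only [map_mul, map_pow, RatFunc.algebraMap_C]
    rw [← h2]
    field_simp
  have hk : k ≠ 0 := by
    rintro rfl
    rw [C_0, zero_mul] at e
    exact mul_ne_zero (pow_ne_zero 3 hn) hu0 e
  have hL : g.num * g.num * g.num * u ≠ 0 := by simp [hn, hu0]
  have hR : C k * (g.denom * g.denom * g.denom) ≠ 0 := by simp [hd, hk]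
  have e2 : g.num * g.num * g.num * u = C k * (g.denom * g.denom * g.denom) := by
    linear_combination e
  have e3 := congrArg (rootMultiplicity 0) e2
  rw [rootMultiplicity_mul hL, rootMultiplicity_mul (left_ne_zero_of_mul hL),
    rootMultiplicity_mul (mul_ne_zero hn hn), rootMultiplicity_mul hR,
    rootMultiplicity_mul (right_ne_zero_of_mul hR),
    rootMultiplicity_mul (mul_ne_zero hd hd), rootMultiplicity_C] at e3
  omega

theorem rootMult_u (K : Type*) [Field K] (b c : K) (hc : c ≠ 0) :
    (X * (X ^ 2 + C b * X + C c) : K[X]).rootMultiplicity 0 = 1 ∧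
    ((X * (X ^ 2 + C b * X + C c)) * (X * (X ^ 2 + C b * X + C c)) : K[X]).rootMultiplicity 0
      = 2 := by
  have hne : (X ^ 2 + C b * X + C c : K[X]).eval 0 ≠ 0 := by simpa using hc
  have hne' : (X ^ 2 + C b * X + C c : K[X]) ≠ 0 := by
    intro h; rw [h] at hne; simp at hne
  have h0 : (X ^ 2 + C b * X + C c : K[X]).rootMultiplicity 0 = 0 :=
    rootMultiplicity_eq_zero hne
  have hX : (X : K[X]).rootMultiplicity 0 = 1 := by
    have := rootMultiplicity_X_sub_C_self (x := (0 : K))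
    simpa using this
  have h1 : (X * (X ^ 2 + C b * X + C c) : K[X]).rootMultiplicity 0 = 1 := by
    rw [rootMultiplicity_mul (mul_ne_zero X_ne_zero hne'), hX, h0]
  refine ⟨h1, ?_⟩
  rw [rootMultiplicity_mul, h1]
  exact mul_ne_zero (mul_ne_zero X_ne_zero hne') (mul_ne_zero X_ne_zero hne')

theorem const_of_isIntegral (K : Type*) [Field K] (g : RatFunc K) (h : IsIntegral K g) :
    ∃ k, g = RatFunc.C k := by
  by_contra hg
  exact g.transcendental_of_ne_C hg h.isAlgebraic

theorem main_aux_s10 (Fq : Type*) [Field Fq] [Fintype Fq] (hq : Fintype.card Fq % 3 = 1)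
    (b c : Fq) (hc : c ≠ 0) (z : AdjoinRoot (kummerPoly Fq b c)) (hz : IsIntegral Fq z) :
    z ∈ (algebraMap Fq (AdjoinRoot (kummerPoly Fq b c))).range := by
  classical
  have h3 : (3 : Fq) ≠ 0 := by
    intro h
    have : Fact (Nat.Prime 3) := ⟨by norm_num⟩
    have h1 : addOrderOf (1 : Fq) = 3 :=
      addOrderOf_eq_prime (by simpa using h) one_ne_zero
    have := addOrderOf_dvd_card (x := (1 : Fq))
    rw [h1] at this
    omega
  obtain ⟨w, hw⟩ : ∃ w : Fq, w ^ 2 + w + 1 = 0 := by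
    have : Fact (Nat.Prime 3) := ⟨by norm_num⟩
    obtain ⟨w, hw⟩ := exists_prime_orderOf_dvd_card (G := Fqˣ) 3 (by
      rw [Fintype.card_units]; omega)
    refine ⟨w, ?_⟩
    have h1 : (w : Fq) ^ 3 = 1 := by
      rw [← Units.val_pow_eq_pow_val, ← hw, pow_orderOf_eq_one]; rfl
    have h2 : (w : Fq) ≠ 1 := by
      intro h
      have : w = 1 := Units.ext h
      simp [this] at hw
    have : ((w : Fq) - 1) * (w ^ 2 + w + 1) = 0 := by linear_combination h1
    exact (mul_eq_zero.1 this).resolve_left (sub_ne_zero.2 h2)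
  have hw3 : w ^ 3 = 1 := by linear_combination (w - 1) * hw
  have hmon : (kummerPoly Fq b c).Monic := monic_X_pow_sub_C _ (by norm_num)
  have hdeg : (kummerPoly Fq b c).natDegree = 3 := natDegree_X_pow_sub_C
  have hnt : Nontrivial (AdjoinRoot (kummerPoly Fq b c)) :=
    AdjoinRoot.nontrivial _ (by rw [degree_eq_natDegree hmon.ne_zero, hdeg]; norm_num)
  set u : Fq[X] := X * (X ^ 2 + C b * X + C c) with hu
  have hxu : xfx Fq b c = algebraMap Fq[X] (RatFunc Fq) u := by
    simp [xfx, hu]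
  set y : (AdjoinRoot (kummerPoly Fq b c)) := AdjoinRoot.root (kummerPoly Fq b c) with hy
  set ι : RatFunc Fq →+* (AdjoinRoot (kummerPoly Fq b c)) := algebraMap (RatFunc Fq) (AdjoinRoot (kummerPoly Fq b c)) with hι
  have hιinj : Function.Injective ι := ι.injective
  have hy3 : y ^ 3 = ι (xfx Fq b c) := by
    have h := AdjoinRoot.eval₂_root (kummerPoly Fq b c)
    have h2 : eval₂ (AdjoinRoot.of (kummerPoly Fq b c)) (AdjoinRoot.root (kummerPoly Fq b c))
        (X ^ 3 - C (xfx Fq b c)) = 0 := h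
    simp only [eval₂_sub, eval₂_pow, eval₂_X, eval₂_C] at h2
    exact sub_eq_zero.1 h2
  have hιC : ∀ k : Fq, ι (RatFunc.C k) = algebraMap Fq (AdjoinRoot (kummerPoly Fq b c)) k := fun k =>
    (IsScalarTower.algebraMap_apply Fq (RatFunc Fq) (AdjoinRoot (kummerPoly Fq b c)) k).symm
  obtain ⟨a0, a1, a2, hza⟩ : ∃ a0 a1 a2 : RatFunc Fq, z = ι a0 + ι a1 * y + ι a2 * y ^ 2 := by
    have hl := AdjoinRoot.mk_leftInverse hmon z
    obtain ⟨P, hP⟩ := AdjoinRoot.mk_surjective z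
    set Q := P %ₘ kummerPoly Fq b c with hQ
    rw [← hP, AdjoinRoot.modByMonicHom_mk, hP] at hl
    have hQd : Q.natDegree < 3 := by
      rw [← hdeg]
      exact natDegree_modByMonic_lt _ hmon (by intro h; rw [h] at hdeg; simp at hdeg)
    refine ⟨Q.coeff 0, Q.coeff 1, Q.coeff 2, ?_⟩
    rw [← hl, ← hQ]
    conv_lhs => rw [Q.as_sum_range_C_mul_X_pow' hQd]
    simp only [Finset.sum_range_succ, Finset.sum_range_zero, map_add, map_mul, map_pow,
      AdjoinRoot.mk_C, AdjoinRoot.mk_X]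
    simp [hι, hy, AdjoinRoot.algebraMap_eq]
  set W : (AdjoinRoot (kummerPoly Fq b c)) := algebraMap Fq (AdjoinRoot (kummerPoly Fq b c)) w with hW
  have hW2 : W ^ 2 + W + 1 = 0 := by
    rw [hW, ← map_pow, ← map_add, ← map_one (algebraMap Fq (AdjoinRoot (kummerPoly Fq b c))), ← map_add, hw, map_zero]
  have hW3 : W ^ 3 = 1 := by linear_combination (W - 1) * hW2
  have hWi : IsIntegral Fq W := isIntegral_algebraMap
  have key : ∃ s : (AdjoinRoot (kummerPoly Fq b c)) →+* (AdjoinRoot (kummerPoly Fq b c)), s y = W * y ∧ ∀ r, s (ι r) = ι r := by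
    refine ⟨AdjoinRoot.lift ι (W * y) ?_, ?_, ?_⟩
    · have h2 : eval₂ ι (W * y) (X ^ 3 - C (xfx Fq b c)) = 0 := ?_
      · exact h2
      simp only [eval₂_sub, eval₂_pow, eval₂_X, eval₂_C]
      rw [mul_pow, hW3, hy3]; ring
    · exact AdjoinRoot.lift_root _
    · intro r; exact AdjoinRoot.lift_of _
  obtain ⟨s, hsy, hsι⟩ := key
  have hsC : ∀ k : Fq, s (algebraMap Fq (AdjoinRoot (kummerPoly Fq b c)) k) = algebraMap Fq (AdjoinRoot (kummerPoly Fq b c)) k := fun k => by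
    rw [← hιC, hsι]
  have hsW : s W = W := hsC w
  let S : (AdjoinRoot (kummerPoly Fq b c)) →ₐ[Fq] (AdjoinRoot (kummerPoly Fq b c)) := { s with commutes' := hsC }
  have hint : ∀ t : (AdjoinRoot (kummerPoly Fq b c)), IsIntegral Fq t → IsIntegral Fq (s t) := fun t ht => ht.map S
  have hz1 := hint z hz
  have hz2 := hint _ hz1
  have e1 : s z = ι a0 + ι a1 * (W * y) + ι a2 * (W * y) ^ 2 := by
    rw [hza]; simp only [map_add, map_mul, map_pow, hsy, hsι]
  have e2 : s (s z) = ι a0 + ι a1 * (W * (W * y)) + ι a2 * (W * (W * y)) ^ 2 := by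
    rw [e1]
    simp only [map_add, map_mul, map_pow, hsy, hsι, hsW]
  set T : (AdjoinRoot (kummerPoly Fq b c)) := algebraMap Fq (AdjoinRoot (kummerPoly Fq b c)) (3 : Fq)⁻¹ with hT
  have hT3 : T * 3 = 1 := by
    have : (3 : (AdjoinRoot (kummerPoly Fq b c))) = algebraMap Fq (AdjoinRoot (kummerPoly Fq b c)) 3 := 
      (map_ofNat (algebraMap Fq (AdjoinRoot (kummerPoly Fq b c))) 3).symm
    rw [this, hT, ← map_mul, inv_mul_cancel₀ h3, map_one]
  have hTi : IsIntegral Fq T := isIntegral_algebraMap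
  have i0 : IsIntegral Fq (ι a0) := by
    have : ι a0 = T * (z + s z + s (s z)) := by
      rw [e2, e1, hza]
      linear_combination (-ι a0) * hT3 - T * (ι a1 * y) * hW2 - T * (ι a2 * y ^ 2) * hW2
        - T * ι a2 * y ^ 2 * W * hW3
    rw [this]; exact hTi.mul ((hz.add hz1).add hz2)
  have i1 : IsIntegral Fq (ι a1 * y) := by
    have : ι a1 * y = T * (z + W ^ 2 * s z + W * s (s z)) := by
      rw [e2, e1, hza]
      linear_combination (-(ι a1 * y)) * hT3 - T * ι a0 * hW2 - 2 * T * (ι a1 * y) * hW3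
        - T * (ι a2 * y ^ 2) * (hW2 + (W + W ^ 2) * hW3)
    rw [this]; exact hTi.mul ((hz.add ((hWi.pow 2).mul hz1)).add (hWi.mul hz2))
  have i2 : IsIntegral Fq (ι a2 * y ^ 2) := by
    have : ι a2 * y ^ 2 = T * (z + W * s z + W ^ 2 * s (s z)) := by
      rw [e2, e1, hza]
      linear_combination (-(ι a2 * y ^ 2)) * hT3 - T * ι a0 * hW2
        - T * (ι a1 * y) * (hW2 + W * hW3)
        - T * (ι a2 * y ^ 2) * (hW3 + (W ^ 3 + 1) * hW3)
    rw [this]; exact hTi.mul ((hz.add (hWi.mul hz1)).add ((hWi.pow 2).mul hz2))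
  have down : ∀ r : RatFunc Fq, IsIntegral Fq (ι r) → ∃ k, r = RatFunc.C k := fun r hr =>
    const_of_isIntegral Fq r ((isIntegral_algebraMap_iff hιinj).1 hr)
  obtain ⟨k0, hk0⟩ := down a0 i0
  obtain ⟨hm1, hm2⟩ := rootMult_u Fq b c hc
  have ha1 : a1 = 0 := by
    have hi := i1.pow 3
    rw [mul_pow, hy3, ← map_pow, ← map_mul, hxu] at hi
    obtain ⟨k, hk⟩ := down _ hi
    exact no_cube Fq a1 u k (by rw [hm1]; norm_num) hk
  have ha2 : a2 = 0 := by
    have hi := i2.pow 3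
    have : (ι a2 * y ^ 2) ^ 3 = ι (a2 ^ 3 * algebraMap Fq[X] (RatFunc Fq) (u * u)) := by
      rw [map_mul (algebraMap Fq[X] (RatFunc Fq)), ← hxu, map_mul, map_mul, map_pow, ← hy3]; ring
    rw [this] at hi
    obtain ⟨k, hk⟩ := down _ hi
    exact no_cube Fq a2 (u * u) k (by rw [hm2]; norm_num) hk
  refine ⟨k0, ?_⟩
  rw [hza, ha1, ha2, hk0, hιC]; simp

/-- Let `𝔽_q` be a finite field with `q ≡ 1 (mod 3)`,
`f(T) = T² + bT + c` monic quadratic irreducible over `𝔽_q`, and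
`F = 𝔽_q(x)[Y]/(Y³ − x·f(x))`.  Then `𝔽_q` is the full field of constants of `F`:
every element of `F` algebraic over `𝔽_q` lies in the canonical image of `𝔽_q`;
equivalently, the integral closure of `𝔽_q` in `F` is `𝔽_q`. -/
theorem stmt_10 (Fq : Type*) [Field Fq] [Fintype Fq] (hq : Fintype.card Fq % 3 = 1)
    (b c : Fq) (hf : Irreducible (X ^ 2 + C b * X + C c : Polynomial Fq)) :
    (∀ z : AdjoinRoot (kummerPoly Fq b c), IsAlgebraic Fq z →
        z ∈ (algebraMap Fq (AdjoinRoot (kummerPoly Fq b c))).range) ∧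
      integralClosure Fq (AdjoinRoot (kummerPoly Fq b c)) = ⊥ := by
  have hc : c ≠ 0 := by
    rintro rfl
    have hroot : (X ^ 2 + C b * X + C 0 : Fq[X]).IsRoot 0 := by simp
    have h1 := degree_eq_one_of_irreducible_of_root hf hroot
    have h2 : (X ^ 2 + C b * X + C 0 : Fq[X]).degree = 2 := by
      have := degree_quadratic (a := (1 : Fq)) (b := b) (c := 0) one_ne_zero
      simpa using this
    rw [h2] at h1
    exact absurd h1 (by decide)
  refine ⟨fun z hz => main_aux_s10 Fq hq b c hc z hz.isIntegral, ?_⟩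
  rw [eq_bot_iff]
  intro z hz
  obtain ⟨k, hk⟩ := main_aux_s10 Fq hq b c hc z hz
  exact Algebra.mem_bot.2 ⟨k, hk⟩
end
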